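/- arXiv:1003.1288 — 2 statements merged into one kernel-verified Lean document; each statement's English description precedes it below -/
import Mathlib

section
/- Let λ, η, κ, α ∈ ℂ and set q^x := e^{ηx}. Let a, d : ℂ → ℂ and Q, Λ : ℂ × ℂ → ℂ (second argument the twist) satisfy the t-Q-equation Λ(λ|κ') Q(λ|κ') = q^{κ'} a(λ) Q(λ−η|κ') + q^{−κ'} d(λ) Q(λ+η|κ') for both κ' = κ and κ' = κ+α. Define φ(μ) = Q(μ|κ+α)/Q(μ|κ), ρ(λ) = Λ(λ|κ+α)/Λ(λ|κ), and 𝔞(λ) = q^{−2κ} d(λ) Q(λ+η|κ) / (a(λ) Q(λ−η|κ)). Assume a(λ) ≠ 0, Λ(λ|κ) ≠ 0, Λ(λ|κ+α) ≠ 0, Q(λ|κ) ≠ 0, Q(λ−η|κ) ≠ 0, Q(λ+η|κ) ≠ 0, and 1 + 𝔞(λ) ≠ 0. Then φ(λ) = q^{−α} φ(λ+η)/ρ(λ) + (q^{α} φ(λ−η) − q^{−α} φ(λ+η)) / (ρ(λ)(1 + 𝔞(λ))). -/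
/-!
The t-Q-equation at twist `κ`, divided by its first term on the right, gives
`1 + 𝔞(λ) = Λ(λ|κ) Q(λ|κ) / (q^κ a(λ) Q(λ-η|κ))`. After this substitution and clearing of
denominators, the identity is `Q(λ+η|κ)` times the t-Q-equation at `κ + α` minus
`q^{-α} Q(λ+η|κ+α)` times the one at `κ`; the terms containing `d(λ)` cancel.
-/

open Complex

/-- The identity `φ(λ) = q^{-α} φ(λ+η)/ρ(λ) + (q^{α} φ(λ-η) - q^{-α} φ(λ+η))/(ρ(λ)(1+𝔞(λ)))`
for `φ(μ) = Q(μ|κ+α)/Q(μ|κ)`, `ρ(λ) = Λ(λ|κ+α)/Λ(λ|κ)` and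
`𝔞(λ) = q^{-2κ} d(λ) Q(λ+η|κ)/(a(λ) Q(λ-η|κ))`, a purely algebraic consequence of the
two t-Q-equations at twists `κ` and `κ+α`.  Here `q^x = e^{ηx}`. -/
theorem phi_tQ_identity (l η κ α : ℂ) (a d : ℂ → ℂ) (Q Lam : ℂ → ℂ → ℂ)
    (htQ : ∀ κ' ∈ ({κ, κ + α} : Set ℂ),
      Lam l κ' * Q l κ' =
        Complex.exp (η * κ') * a l * Q (l - η) κ' +
          Complex.exp (-(η * κ')) * d l * Q (l + η) κ')
    (ha : a l ≠ 0)
    (hLam1 : Lam l κ ≠ 0) (hLam2 : Lam l (κ + α) ≠ 0)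
    (hQ : Q l κ ≠ 0) (hQm : Q (l - η) κ ≠ 0) (hQp : Q (l + η) κ ≠ 0)
    (hfra : 1 + Complex.exp (-(η * (2 * κ))) * d l * Q (l + η) κ /
        (a l * Q (l - η) κ) ≠ 0) :
    Q l (κ + α) / Q l κ =
      Complex.exp (-(η * α)) * (Q (l + η) (κ + α) / Q (l + η) κ) /
          (Lam l (κ + α) / Lam l κ) +
        (Complex.exp (η * α) * (Q (l - η) (κ + α) / Q (l - η) κ) -
            Complex.exp (-(η * α)) * (Q (l + η) (κ + α) / Q (l + η) κ)) /
          ((Lam l (κ + α) / Lam l κ) *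
            (1 + Complex.exp (-(η * (2 * κ))) * d l * Q (l + η) κ /
              (a l * Q (l - η) κ))) := by
  have h1 := htQ κ (by simp)
  have h2 := htQ (κ + α) (by simp)
  have hE : Complex.exp (η * κ) ≠ 0 := Complex.exp_ne_zero _
  have hA : Complex.exp (η * α) ≠ 0 := Complex.exp_ne_zero _
  have e2 : Complex.exp (-(η * (2 * κ))) = (Complex.exp (η * κ))⁻¹ * (Complex.exp (η * κ))⁻¹ := by
    rw [← Complex.exp_neg, ← Complex.exp_add]
    congr 1
    ring
  rw [mul_add, neg_add, Complex.exp_add, Complex.exp_add, Complex.exp_neg, Complex.exp_neg] at h2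
  rw [Complex.exp_neg] at h1
  -- The t-Q-equation at `κ` evaluates `1 + 𝔞` in closed form.
  have hone : 1 + Complex.exp (-(η * (2 * κ))) * d l * Q (l + η) κ / (a l * Q (l - η) κ) =
      Lam l κ * Q l κ / (Complex.exp (η * κ) * a l * Q (l - η) κ) := by
    rw [h1, e2]
    field_simp
  rw [hone, Complex.exp_neg]
  generalize Complex.exp (η * κ) = E at *
  generalize Complex.exp (η * α) = A at *
  -- Clearing denominators leaves
  -- `Λ' Q' Q₊ = A⁻¹ Q₊' Λ Q + (A Q₋' Q₊ - A⁻¹ Q₊' Q₋) E a`, where primes denote twist `κ + α`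
  -- and `±` the shift by `±η`: a linear combination of the two t-Q-equations.
  have key : Lam l (κ + α) * Q l (κ + α) * Q (l + η) κ =
      A⁻¹ * Q (l + η) (κ + α) * (Lam l κ * Q l κ) +
        (A * Q (l - η) (κ + α) * Q (l + η) κ - A⁻¹ * Q (l + η) (κ + α) * Q (l - η) κ) *
          (E * a l) := by
    linear_combination Q (l + η) κ * h2 - A⁻¹ * Q (l + η) (κ + α) * h1
  clear h1 h2 hone e2 hfra htQ
  field_simp at key ⊢
  linear_combination key
end

section
/- Let η, α ∈ ℂ with 0 < Im η < π/2 and Re η = 0, set q^x := e^{ηx}, and define K_α(z) = q^{−α} coth(z−η) − q^{α} coth(z+η). Let λ ∈ ℂ and let R = [x₁, x₂] × [y₁, y₂] be a closed rectangle in ℂ with height y₂ − y₁ < π whose open interior contains both λ + η and λ − η. Let φ be holomorphic on an open set containing R. Then the counterclockwise boundary integral satisfies (1/2πi) ∮_{∂R} φ(μ) K_α(μ − λ) dμ = q^{−α} φ(λ+η) − q^{α} φ(λ−η). -/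
/-!
The residue computation is reduced to one simple pole at a time: with
`S(μ) = sinh (μ - p) / (μ - p)` (removable singularity filled in by `dslope`), the function
`φ(μ) coth (μ - p)` equals `g(μ) / (μ - p)` where `g = φ · cosh (· - p) / S` is holomorphic near the
rectangle, because the height bound `< π` keeps the other zeros of `sinh (· - p)` away, and
`g(p) = φ(p)`. Splitting `g(μ) / (μ - p) = dslope g p μ + g(p) / (μ - p)`, the first term is
holomorphic and integrates to zero by Cauchy–Goursat (`rectInt_eq_zero`), while
`∮ dμ / (μ - p) = 2πi` follows from explicit logarithms on the four edges
(`rectInt_inv`). The theorem is the linear combination of the cases `p = l + η` and `p = l - η`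
of `rectInt_coth`.
-/

open Complex Filter Topology intervalIntegral

/-- The complex hyperbolic cotangent. -/
noncomputable def ccoth (z : ℂ) : ℂ := Complex.cosh z / Complex.sinh z

/-- The deformed kernel `K_α(z) = q^{-α} coth(z-η) - q^{α} coth(z+η)`, where `q^x = e^{ηx}`. -/
noncomputable def Kalpha (η α z : ℂ) : ℂ :=
  Complex.exp (-(η * α)) * ccoth (z - η) - Complex.exp (η * α) * ccoth (z + η)

/-- The counterclockwise integral of `f` over the boundary of `[x₁, x₂] × [y₁, y₂]`. -/
noncomputable def rectInt (x₁ x₂ y₁ y₂ : ℝ) (f : ℂ → ℂ) : ℂ :=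
  (∫ x in x₁..x₂, f ((x : ℂ) + y₁ * I)) + (∫ y in y₁..y₂, f ((x₂ : ℂ) + y * I) * I) -
    (∫ x in x₁..x₂, f ((x : ℂ) + y₂ * I)) - (∫ y in y₁..y₂, f ((x₁ : ℂ) + y * I) * I)

/-- The boundary of the closed rectangle `[x₁, x₂] × [y₁, y₂]`, as the union of its four edges. -/
def rectBdry (x₁ x₂ y₁ y₂ : ℝ) : Set ℂ :=
  {z | z.re ∈ Set.Icc x₁ x₂ ∧ z.im ∈ Set.Icc y₁ y₂ ∧
    (z.re = x₁ ∨ z.re = x₂ ∨ z.im = y₁ ∨ z.im = y₂)}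

section RectInt

variable {x₁ x₂ y₁ y₂ : ℝ}

lemma horizontal_mem (hx : x₁ ≤ x₂) (hy : y₁ ≤ y₂) {x y : ℝ} (h : x ∈ Set.uIcc x₁ x₂)
    (hyy : y = y₁ ∨ y = y₂) : (x : ℂ) + y * I ∈ rectBdry x₁ x₂ y₁ y₂ := by
  rw [Set.uIcc_of_le hx] at h
  rcases hyy with rfl | rfl <;> simp [rectBdry, h.1, h.2, hy]

lemma vertical_mem (hx : x₁ ≤ x₂) (hy : y₁ ≤ y₂) {x y : ℝ} (h : y ∈ Set.uIcc y₁ y₂)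
    (hxx : x = x₁ ∨ x = x₂) : (x : ℂ) + y * I ∈ rectBdry x₁ x₂ y₁ y₂ := by
  rw [Set.uIcc_of_le hy] at h
  rcases hxx with rfl | rfl <;> simp [rectBdry, h.1, h.2, hx]

lemma intervalIntegrable_horizontal (hx : x₁ ≤ x₂) (hy : y₁ ≤ y₂) {f : ℂ → ℂ}
    (hf : ContinuousOn f (rectBdry x₁ x₂ y₁ y₂)) {y : ℝ} (hyy : y = y₁ ∨ y = y₂) :
    IntervalIntegrable (fun x : ℝ => f ((x : ℂ) + y * I)) MeasureTheory.volume x₁ x₂ :=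
  ContinuousOn.intervalIntegrable <|
    hf.comp (f := fun x : ℝ => (x : ℂ) + y * I) (by fun_prop)
      fun _ h => horizontal_mem hx hy h hyy

lemma intervalIntegrable_vertical (hx : x₁ ≤ x₂) (hy : y₁ ≤ y₂) {f : ℂ → ℂ}
    (hf : ContinuousOn f (rectBdry x₁ x₂ y₁ y₂)) {x : ℝ} (hxx : x = x₁ ∨ x = x₂) :
    IntervalIntegrable (fun y : ℝ => f ((x : ℂ) + y * I) * I) MeasureTheory.volume y₁ y₂ :=
  ContinuousOn.intervalIntegrable <|
    (hf.comp (f := fun y : ℝ => (x : ℂ) + y * I) (by fun_prop)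
      fun _ h => vertical_mem hx hy h hxx).mul continuousOn_const

lemma rectInt_add (hx : x₁ ≤ x₂) (hy : y₁ ≤ y₂) {f g : ℂ → ℂ}
    (hf : ContinuousOn f (rectBdry x₁ x₂ y₁ y₂)) (hg : ContinuousOn g (rectBdry x₁ x₂ y₁ y₂)) :
    rectInt x₁ x₂ y₁ y₂ (fun z => f z + g z) =
      rectInt x₁ x₂ y₁ y₂ f + rectInt x₁ x₂ y₁ y₂ g := by
  simp only [rectInt, add_mul]
  rw [integral_add (intervalIntegrable_horizontal hx hy hf (.inl rfl))
      (intervalIntegrable_horizontal hx hy hg (.inl rfl)),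
    integral_add (intervalIntegrable_horizontal hx hy hf (.inr rfl))
      (intervalIntegrable_horizontal hx hy hg (.inr rfl)),
    integral_add (intervalIntegrable_vertical hx hy hf (.inl rfl))
      (intervalIntegrable_vertical hx hy hg (.inl rfl)),
    integral_add (intervalIntegrable_vertical hx hy hf (.inr rfl))
      (intervalIntegrable_vertical hx hy hg (.inr rfl))]
  ring

lemma rectInt_const_mul (c : ℂ) (f : ℂ → ℂ) :
    rectInt x₁ x₂ y₁ y₂ (fun z => c * f z) = c * rectInt x₁ x₂ y₁ y₂ f := by
  simp only [rectInt, mul_assoc, integral_const_mul]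
  ring

lemma rectInt_congr (hx : x₁ ≤ x₂) (hy : y₁ ≤ y₂) {f g : ℂ → ℂ}
    (h : Set.EqOn f g (rectBdry x₁ x₂ y₁ y₂)) :
    rectInt x₁ x₂ y₁ y₂ f = rectInt x₁ x₂ y₁ y₂ g := by
  unfold rectInt
  congr 1
  · congr 1
    · congr 1
      · exact integral_congr fun x hxx => h (horizontal_mem hx hy hxx (.inl rfl))
      · exact integral_congr fun y hyy => by
          simp only [h (vertical_mem hx hy hyy (.inr rfl))]
    · exact integral_congr fun x hxx => h (horizontal_mem hx hy hxx (.inr rfl))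
  · exact integral_congr fun y hyy => by
      simp only [h (vertical_mem hx hy hyy (.inl rfl))]

/-- Cauchy–Goursat for `rectInt`. -/
lemma rectInt_eq_zero (hx : x₁ ≤ x₂) (hy : y₁ ≤ y₂) {f : ℂ → ℂ}
    (hf : DifferentiableOn ℂ f {z : ℂ | z.re ∈ Set.Icc x₁ x₂ ∧ z.im ∈ Set.Icc y₁ y₂}) :
    rectInt x₁ x₂ y₁ y₂ f = 0 := by
  have h := integral_boundary_rect_eq_zero_of_differentiableOn f ⟨x₁, y₁⟩ ⟨x₂, y₂⟩ (by
    refine hf.mono fun z hz => ?_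
    rw [mem_reProdIm] at hz
    simpa [Set.uIcc_of_le hx, Set.uIcc_of_le hy] using hz)
  simp only [smul_eq_mul] at h
  rw [← h]
  simp only [rectInt, integral_mul_const]
  ring

/-- The logarithm is a primitive on the bottom, right and top edges; the left edge crosses the
branch cut, and `log (-z)` is used there instead. -/
lemma rectInt_inv_zero (hx₁ : x₁ < 0) (hx₂ : 0 < x₂) (hy₁ : y₁ < 0) (hy₂ : 0 < y₂) :
    rectInt x₁ x₂ y₁ y₂ (fun z => z⁻¹) = 2 * Real.pi * I := by
  have hx : x₁ ≤ x₂ := by linarith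
  have hy : y₁ ≤ y₂ := by linarith
  have hcont : ContinuousOn (fun z : ℂ => z⁻¹) (rectBdry x₁ x₂ y₁ y₂) := by
    refine continuousOn_inv₀.mono ?_
    rintro z ⟨-, -, h⟩ rfl
    simp only [zero_re, zero_im] at h
    rcases h with h | h | h | h <;> linarith
  have horiz (y : ℝ) (hyy : y = y₁ ∨ y = y₂) :
      ∫ x in x₁..x₂, ((x : ℂ) + y * I)⁻¹ =
        Complex.log ((x₂ : ℂ) + y * I) - Complex.log ((x₁ : ℂ) + y * I) := by
    refine integral_eq_sub_of_hasDerivAt (f := fun x : ℝ => Complex.log ((x : ℂ) + y * I))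
      (fun x _ => ?_) (intervalIntegrable_horizontal hx hy hcont hyy)
    have h1 : HasDerivAt (fun x : ℝ => (x : ℂ) + y * I) 1 x :=
      (HasDerivAt.ofReal_comp (hasDerivAt_id x)).add_const _
    have h2 : (x : ℂ) + y * I ∈ slitPlane := by
      right
      rcases hyy with rfl | rfl <;> simp <;> linarith
    simpa using h1.clog_real h2
  have right : ∫ y in y₁..y₂, ((x₂ : ℂ) + y * I)⁻¹ * I =
        Complex.log ((x₂ : ℂ) + y₂ * I) - Complex.log ((x₂ : ℂ) + y₁ * I) := by
    refine integral_eq_sub_of_hasDerivAt (f := fun y : ℝ => Complex.log ((x₂ : ℂ) + y * I))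
      (fun y _ => ?_) (intervalIntegrable_vertical hx hy hcont (.inr rfl))
    have h1 : HasDerivAt (fun y : ℝ => (x₂ : ℂ) + y * I) (1 * I) y :=
      ((HasDerivAt.ofReal_comp (hasDerivAt_id y)).mul_const I).const_add _
    have h2 : (x₂ : ℂ) + y * I ∈ slitPlane := by
      left; simpa using hx₂
    refine (h1.clog_real h2).congr_deriv ?_
    rw [div_eq_mul_inv]; ring
  have left : ∫ y in y₁..y₂, ((x₁ : ℂ) + y * I)⁻¹ * I =
        Complex.log (-((x₁ : ℂ) + y₂ * I)) - Complex.log (-((x₁ : ℂ) + y₁ * I)) := by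
    refine integral_eq_sub_of_hasDerivAt (f := fun y : ℝ => Complex.log (-((x₁ : ℂ) + y * I)))
      (fun y _ => ?_) (intervalIntegrable_vertical hx hy hcont (.inl rfl))
    have h1 : HasDerivAt (fun y : ℝ => -((x₁ : ℂ) + y * I)) (-(1 * I)) y :=
      (((HasDerivAt.ofReal_comp (hasDerivAt_id y)).mul_const I).const_add _).neg
    have h2 : -((x₁ : ℂ) + y * I) ∈ slitPlane := by
      left; simpa using hx₁
    refine (h1.clog_real h2).congr_deriv ?_
    rw [neg_div_neg_eq, div_eq_mul_inv]; ring
  have jump₂ : Complex.log (-((x₁ : ℂ) + y₂ * I)) =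
      Complex.log ((x₁ : ℂ) + y₂ * I) - Real.pi * I := by
    simp only [Complex.log, norm_neg]
    rw [arg_neg_eq_arg_sub_pi_of_im_pos (by simpa using hy₂)]
    push_cast; ring
  have jump₁ : Complex.log (-((x₁ : ℂ) + y₁ * I)) =
      Complex.log ((x₁ : ℂ) + y₁ * I) + Real.pi * I := by
    simp only [Complex.log, norm_neg]
    rw [arg_neg_eq_arg_add_pi_of_im_neg (by simpa using hy₁)]
    push_cast; ring
  simp only [rectInt]
  rw [horiz y₁ (.inl rfl), horiz y₂ (.inr rfl), right, left, jump₁, jump₂]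
  ring

lemma rectInt_inv {p : ℂ} (hp1 : p.re ∈ Set.Ioo x₁ x₂) (hp2 : p.im ∈ Set.Ioo y₁ y₂) :
    rectInt x₁ x₂ y₁ y₂ (fun z => (z - p)⁻¹) = 2 * Real.pi * I := by
  rw [← rectInt_inv_zero (x₁ := x₁ - p.re) (x₂ := x₂ - p.re) (y₁ := y₁ - p.im)
    (y₂ := y₂ - p.im) (by linarith [hp1.1]) (by linarith [hp1.2]) (by linarith [hp2.1])
    (by linarith [hp2.2])]
  have e (x y : ℝ) : (x : ℂ) + y * I - p = ((x - p.re : ℝ) : ℂ) + ((y - p.im : ℝ) : ℂ) * I := by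
    apply Complex.ext <;> simp
  simp only [rectInt, e]
  rw [integral_comp_sub_right (fun x : ℝ => ((x : ℂ) + ((y₁ - p.im : ℝ) : ℂ) * I)⁻¹),
    integral_comp_sub_right (fun x : ℝ => ((x : ℂ) + ((y₂ - p.im : ℝ) : ℂ) * I)⁻¹),
    integral_comp_sub_right (fun y : ℝ => (((x₁ - p.re : ℝ) : ℂ) + (y : ℂ) * I)⁻¹ * I),
    integral_comp_sub_right (fun y : ℝ => (((x₂ - p.re : ℝ) : ℂ) + (y : ℂ) * I)⁻¹ * I)]

lemma sinh_ne_zero_of_abs_im_lt_pi {z : ℂ} (hz : z ≠ 0) (him : |z.im| < Real.pi) :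
    Complex.sinh z ≠ 0 := by
  intro h
  have h' : Complex.sin (z * I) = 0 := by rw [Complex.sin_mul_I, h, zero_mul]
  obtain ⟨k, hk⟩ := Complex.sin_eq_zero_iff.mp h'
  have hre : -z.im = k * Real.pi := by simpa using congrArg re hk
  have him' : z.re = 0 := by simpa using congrArg im hk
  have hk0 : k = 0 := by
    rw [← abs_neg, hre, abs_mul, abs_of_pos Real.pi_pos] at him
    have : |(k : ℝ)| < 1 := by nlinarith [Real.pi_pos]
    exact Int.abs_lt_one_iff.mp (by exact_mod_cast this)
  apply hz
  apply Complex.ext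
  · simpa using him'
  · simpa [hk0] using hre

lemma sub_ne_zero_of_mem_rectBdry {p : ℂ} (hp1 : p.re ∈ Set.Ioo x₁ x₂)
    (hp2 : p.im ∈ Set.Ioo y₁ y₂) {z : ℂ} (hz : z ∈ rectBdry x₁ x₂ y₁ y₂) : z - p ≠ 0 := by
  intro h
  obtain rfl := sub_eq_zero.mp h
  rcases hz.2.2 with h | h | h | h
  · exact hp1.1.ne' h
  · exact hp1.2.ne h
  · exact hp2.1.ne' h
  · exact hp2.2.ne h

lemma abs_im_sub_lt_pi (hheight : y₂ - y₁ < Real.pi) {p : ℂ} (hp2 : p.im ∈ Set.Ioo y₁ y₂)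
    {z : ℂ} (hz : z.im ∈ Set.Icc y₁ y₂) : |(z - p).im| < Real.pi := by
  rw [sub_im, abs_lt]
  constructor <;> linarith [hp2.1, hp2.2, hz.1, hz.2]

lemma continuousOn_mul_ccoth (hheight : y₂ - y₁ < Real.pi) {p : ℂ}
    (hp1 : p.re ∈ Set.Ioo x₁ x₂) (hp2 : p.im ∈ Set.Ioo y₁ y₂) {φ : ℂ → ℂ}
    (hφ : ContinuousOn φ (rectBdry x₁ x₂ y₁ y₂)) :
    ContinuousOn (fun z => φ z * ccoth (z - p)) (rectBdry x₁ x₂ y₁ y₂) := by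
  refine hφ.mul (ContinuousOn.div ?_ ?_ fun z hz => ?_)
  · exact (Complex.continuous_cosh.comp (continuous_id.sub continuous_const)).continuousOn
  · exact (Complex.continuous_sinh.comp (continuous_id.sub continuous_const)).continuousOn
  · exact sinh_ne_zero_of_abs_im_lt_pi (sub_ne_zero_of_mem_rectBdry hp1 hp2 hz)
      (abs_im_sub_lt_pi hheight hp2 hz.2.1)

/-- The residue theorem for `φ(μ) coth (μ - p)`, whose only pole in the rectangle is `p`. -/
lemma rectInt_coth (hheight : y₂ - y₁ < Real.pi) {p : ℂ}
    (hp1 : p.re ∈ Set.Ioo x₁ x₂) (hp2 : p.im ∈ Set.Ioo y₁ y₂) {φ : ℂ → ℂ} {U : Set ℂ}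
    (hU : IsOpen U) (hRU : {z : ℂ | z.re ∈ Set.Icc x₁ x₂ ∧ z.im ∈ Set.Icc y₁ y₂} ⊆ U)
    (hφ : DifferentiableOn ℂ φ U) :
    rectInt x₁ x₂ y₁ y₂ (fun z => φ z * ccoth (z - p)) = 2 * Real.pi * I * φ p := by
  have hx : x₁ ≤ x₂ := (hp1.1.trans hp1.2).le
  have hy : y₁ ≤ y₂ := (hp2.1.trans hp2.2).le
  set s : ℂ → ℂ := fun z => Complex.sinh (z - p) with hs
  have hs' (z : ℂ) : HasDerivAt s (Complex.cosh (z - p)) z := by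
    simpa using ((hasDerivAt_id z).sub_const p).csinh
  set S : ℂ → ℂ := dslope s p with hS
  have hSd : Differentiable ℂ S := by
    rw [← differentiableOn_univ]
    exact (Complex.differentiableOn_dslope univ_mem).mpr
      fun z _ => (hs' z).differentiableAt.differentiableWithinAt
  have hSp : S p = 1 := by simp [hS, dslope_same, (hs' p).deriv]
  have hSne {z : ℂ} (hz : z ≠ p) : S z = Complex.sinh (z - p) / (z - p) := by
    rw [hS, dslope_of_ne _ hz, slope_def_field]; simp [hs]
  set V : Set ℂ := U ∩ {z | S z ≠ 0} with hV
  have hVo : IsOpen V := hU.inter (isOpen_ne_fun hSd.continuous continuous_const)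
  have hRV : {z : ℂ | z.re ∈ Set.Icc x₁ x₂ ∧ z.im ∈ Set.Icc y₁ y₂} ⊆ V := by
    refine fun z hz => ⟨hRU hz, ?_⟩
    by_cases hzp : z = p
    · simp [hzp, hSp]
    · have h0 := sub_ne_zero.mpr hzp
      simpa [hSne hzp, h0] using
        sinh_ne_zero_of_abs_im_lt_pi h0 (abs_im_sub_lt_pi hheight hp2 hz.2)
  set g : ℂ → ℂ := fun z => φ z * Complex.cosh (z - p) / S z with hg
  have hgd : DifferentiableOn ℂ g V := by
    refine ((hφ.mono Set.inter_subset_left).mul ?_).div hSd.differentiableOn fun z hz => hz.2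
    exact fun z _ => (((hasDerivAt_id z).sub_const p).ccosh).differentiableAt.differentiableWithinAt
  have hgp : g p = φ p := by simp [hg, hSp]
  have hpV : V ∈ 𝓝 p :=
    hVo.mem_nhds (hRV ⟨⟨hp1.1.le, hp1.2.le⟩, ⟨hp2.1.le, hp2.2.le⟩⟩)
  have hdg : DifferentiableOn ℂ (dslope g p) V := (Complex.differentiableOn_dslope hpV).mpr hgd
  have hBV : rectBdry x₁ x₂ y₁ y₂ ⊆ V := fun z hz => hRV ⟨hz.1, hz.2.1⟩
  have key : Set.EqOn (fun z => φ z * ccoth (z - p))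
      (fun z => dslope g p z + φ p * (z - p)⁻¹) (rectBdry x₁ x₂ y₁ y₂) := by
    intro z hz
    have h0 := sub_ne_zero_of_mem_rectBdry hp1 hp2 hz
    have hzp := sub_ne_zero.mp h0
    have hsz := sinh_ne_zero_of_abs_im_lt_pi h0 (abs_im_sub_lt_pi hheight hp2 hz.2.1)
    simp only
    rw [dslope_of_ne _ hzp, slope_def_field, hgp]
    simp only [hg, hSne hzp, ccoth]
    field_simp
    ring
  rw [rectInt_congr hx hy key, rectInt_add hx hy (hdg.continuousOn.mono hBV),
    rectInt_eq_zero hx hy (hdg.mono hRV), rectInt_const_mul, rectInt_inv hp1 hp2]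
  · ring
  · exact continuousOn_const.mul (ContinuousOn.inv₀ (by fun_prop)
      fun z hz => sub_ne_zero_of_mem_rectBdry hp1 hp2 hz)

end RectInt

/-- Residue computation: for a rectangle `R = [x₁,x₂] × [y₁,y₂]` of height `< π` whose
open interior contains `λ+η` and `λ-η`, and `φ` holomorphic on an open set containing `R`,
the counterclockwise boundary integral satisfies
`(1/2πi) ∮_{∂R} φ(μ) K_α(μ-λ) dμ = q^{-α} φ(λ+η) - q^{α} φ(λ-η)`. -/
theorem rectangle_residue (η α l : ℂ)
    (hηre : η.re = 0) (hηim1 : 0 < η.im) (hηim2 : η.im < Real.pi / 2)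
    (x₁ x₂ y₁ y₂ : ℝ) (hheight : y₂ - y₁ < Real.pi)
    (hp1 : (l + η).re ∈ Set.Ioo x₁ x₂) (hp2 : (l + η).im ∈ Set.Ioo y₁ y₂)
    (hm1 : (l - η).re ∈ Set.Ioo x₁ x₂) (hm2 : (l - η).im ∈ Set.Ioo y₁ y₂)
    (φ : ℂ → ℂ) (U : Set ℂ) (hU : IsOpen U)
    (hRU : {z : ℂ | z.re ∈ Set.Icc x₁ x₂ ∧ z.im ∈ Set.Icc y₁ y₂} ⊆ U)
    (hφ : DifferentiableOn ℂ φ U) :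
    (1 / (2 * Real.pi * Complex.I)) *
        ((∫ x in x₁..x₂, φ ((x : ℂ) + y₁ * Complex.I) *
            Kalpha η α ((x : ℂ) + y₁ * Complex.I - l)) +
         (∫ y in y₁..y₂, φ ((x₂ : ℂ) + y * Complex.I) *
            Kalpha η α ((x₂ : ℂ) + y * Complex.I - l) * Complex.I) -
         (∫ x in x₁..x₂, φ ((x : ℂ) + y₂ * Complex.I) *
            Kalpha η α ((x : ℂ) + y₂ * Complex.I - l)) -
         (∫ y in y₁..y₂, φ ((x₁ : ℂ) + y * Complex.I) *
            Kalpha η α ((x₁ : ℂ) + y * Complex.I - l) * Complex.I)) =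
      Complex.exp (-(η * α)) * φ (l + η) - Complex.exp (η * α) * φ (l - η) := by
  have hx : x₁ ≤ x₂ := (hp1.1.trans hp1.2).le
  have hy : y₁ ≤ y₂ := (hp2.1.trans hp2.2).le
  have hφB : ContinuousOn φ (rectBdry x₁ x₂ y₁ y₂) :=
    hφ.continuousOn.mono fun z hz => hRU ⟨hz.1, hz.2.1⟩
  have hsplit : (fun z => φ z * Kalpha η α (z - l)) =
      fun z => Complex.exp (-(η * α)) * (φ z * ccoth (z - (l + η))) +
        -Complex.exp (η * α) * (φ z * ccoth (z - (l - η))) := by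
    funext z
    rw [Kalpha, show z - l - η = z - (l + η) by ring, show z - l + η = z - (l - η) by ring]
    ring
  change (1 / (2 * Real.pi * Complex.I)) *
    rectInt x₁ x₂ y₁ y₂ (fun z => φ z * Kalpha η α (z - l)) = _
  rw [hsplit, rectInt_add hx hy
      (f := fun z => Complex.exp (-(η * α)) * (φ z * ccoth (z - (l + η))))
      (g := fun z => -Complex.exp (η * α) * (φ z * ccoth (z - (l - η))))
      (continuousOn_const.mul (continuousOn_mul_ccoth hheight hp1 hp2 hφB))
      (continuousOn_const.mul (continuousOn_mul_ccoth hheight hm1 hm2 hφB)),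
    rectInt_const_mul, rectInt_const_mul, rectInt_coth hheight hp1 hp2 hU hRU hφ,
    rectInt_coth hheight hm1 hm2 hU hRU hφ]
  have hpi : (Real.pi : ℂ) ≠ 0 := by exact_mod_cast Real.pi_ne_zero
  field_simp [I_ne_zero]
  ring
end
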